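/- arXiv:1303.2475 — 3 statements merged into one kernel-verified Lean document; each statement's English description precedes it below -/
import Mathlib

section
/- The map sending a pair (i,j) ∈ I(n,d) × I(n,d) to the matrix D(i,j) is constant on orbits of the diagonal S_d-action (i.e. D(w • i, w • j) = D(i,j) for all w ∈ S_d), and the induced map from the set of S_d-orbits on I(n,d) × I(n,d) to M(n,d) is a bijection. -/
/-!
The matrix `D(i,j)` records the sizes of the fibres of the map
`k ↦ (i k, j k)` from `Fin d` to `Fin n × Fin n`, and precomposing with a permutation of `Fin d`
does not change these sizes. Two maps with fibres of equal size differ by a permutation of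
the source, obtained by gluing bijections between corresponding fibres (`exists_permAct_of_Dmat_eq`);
this is injectivity on orbits. Any prescribed fibre sizes with total `d` are realised by
identifying `Fin d` with the disjoint union of sets of those sizes (`exists_Dmat_eq`); this is
surjectivity onto `M(n,d)`.
-/

open Finset

noncomputable section

/-- The action of `S_d` on `I(n,d) = Fin d → Fin n`, `w • i = i ∘ w⁻¹`. -/
def permAct {n d : ℕ} (w : Equiv.Perm (Fin d)) (i : Fin d → Fin n) : Fin d → Fin n :=
  i ∘ ⇑w⁻¹

lemma permAct_one {n d : ℕ} (i : Fin d → Fin n) : permAct 1 i = i := rfl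

lemma permAct_mul {n d : ℕ} (w v : Equiv.Perm (Fin d)) (i : Fin d → Fin n) :
    permAct (w * v) i = permAct w (permAct v i) := by
  funext k
  simp [permAct, mul_inv_rev]

/-- The matrix `D(i,j)` with `(a,b)` entry `#{k | i k = a ∧ j k = b}`. -/
def Dmat {n d : ℕ} (i j : Fin d → Fin n) : Matrix (Fin n) (Fin n) ℕ :=
  fun a b => (Finset.univ.filter (fun k => i k = a ∧ j k = b)).card

/-- `M(n,d)`: matrices of naturals with entries summing to `d`. -/
def Mset (n d : ℕ) : Set (Matrix (Fin n) (Fin n) ℕ) :=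
  {D | ∑ a, ∑ b, D a b = d}

/-- The setoid on `I(n,d) × I(n,d)` whose classes are the orbits of the diagonal
`S_d`-action. -/
def orbitSetoid (n d : ℕ) : Setoid ((Fin d → Fin n) × (Fin d → Fin n)) where
  r p q := ∃ w : Equiv.Perm (Fin d), (permAct w p.1, permAct w p.2) = q
  iseqv := by
    constructor
    · intro p
      exact ⟨1, by simp [permAct_one]⟩
    · rintro p q ⟨w, h⟩
      refine ⟨w⁻¹, ?_⟩
      rw [← h]
      simp [← permAct_mul, permAct_one]
    · rintro p q r ⟨w, hw⟩ ⟨v, hv⟩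
      refine ⟨v * w, ?_⟩
      rw [← hv, ← hw]
      simp [permAct_mul]

lemma Dmat_permAct {n d : ℕ} (w : Equiv.Perm (Fin d)) (i j : Fin d → Fin n) :
    Dmat (permAct w i) (permAct w j) = Dmat i j := by
  funext a b
  unfold Dmat
  exact Finset.card_equiv w⁻¹ fun k => by
    rw [Finset.mem_filter_univ, Finset.mem_filter_univ]
    rfl

lemma Dmat_eq_card_fiber {n d : ℕ} (i j : Fin d → Fin n) (c : Fin n × Fin n) :
    Dmat i j c.1 c.2 = Fintype.card {k // (i k, j k) = c} := by
  rw [Fintype.card_subtype]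
  simp [Dmat, Prod.ext_iff]

/-- Pairs with the same matrix lie in the same orbit. -/
lemma exists_permAct_of_Dmat_eq {n d : ℕ} {i j i' j' : Fin d → Fin n}
    (h : Dmat i j = Dmat i' j') :
    ∃ w : Equiv.Perm (Fin d), (permAct w i, permAct w j) = (i', j') := by
  have e : ∀ c : Fin n × Fin n, {k // (i k, j k) = c} ≃ {k // (i' k, j' k) = c} := fun c =>
    Fintype.equivOfCardEq (by rw [← Dmat_eq_card_fiber, ← Dmat_eq_card_fiber, h])
  let w : Equiv.Perm (Fin d) :=
    Equiv.ofFiberEquiv (f := fun k => (i k, j k)) (g := fun k => (i' k, j' k)) e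
  have hw : ∀ k, (i' (w k), j' (w k)) = (i k, j k) := fun k =>
    Equiv.ofFiberEquiv_map (f := fun k => (i k, j k)) (g := fun k => (i' k, j' k)) e k
  refine ⟨w, Prod.ext (funext fun k => ?_) (funext fun k => ?_)⟩
  · simpa [permAct] using (congrArg Prod.fst (hw (w⁻¹ k))).symm
  · simpa [permAct] using (congrArg Prod.snd (hw (w⁻¹ k))).symm

lemma Dmat_mem_Mset {n d : ℕ} (i j : Fin d → Fin n) : Dmat i j ∈ Mset n d := by
  change ∑ a, ∑ b, Dmat i j a b = d
  rw [← Fintype.sum_prod_type' (Dmat i j)]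
  simp_rw [Dmat_eq_card_fiber]
  rw [← Fintype.card_sigma, Fintype.card_congr (Equiv.sigmaFiberEquiv fun k => (i k, j k)),
    Fintype.card_fin]

/-- Every matrix in `M(n,d)` is some `D(i,j)`. -/
lemma exists_Dmat_eq {n d : ℕ} {D : Matrix (Fin n) (Fin n) ℕ} (hD : D ∈ Mset n d) :
    ∃ i j : Fin d → Fin n, Dmat i j = D := by
  have hcard : Fintype.card (Fin d) = Fintype.card (Σ c : Fin n × Fin n, Fin (D c.1 c.2)) := by
    rw [Fintype.card_sigma]
    simp only [Fintype.card_fin]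
    rw [Fintype.sum_prod_type' D]
    exact hD.symm
  let e := Fintype.equivOfCardEq hcard
  refine ⟨fun k => (e k).1.1, fun k => (e k).1.2, ?_⟩
  funext a b
  rw [Dmat_eq_card_fiber _ _ (a, b)]
  -- The fibre over `(a, b)` corresponds under `e` to the summand `Fin (D a b)`.
  have e' : {k // ((e k).1.1, (e k).1.2) = (a, b)} ≃ Fin (D a b) :=
    (e.subtypeEquiv (q := fun x => x.1 = (a, b)) fun _ => Iff.rfl).trans
      (Equiv.sigmaSubtype (β := fun c : Fin n × Fin n => Fin (D c.1 c.2)) (a, b))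
  rw [Fintype.card_congr e', Fintype.card_fin]

/-- `(i,j) ↦ D(i,j)` is constant on orbits of the diagonal `S_d`-action, and the induced
map from the set of orbits to `M(n,d)` is a bijection. -/
theorem Dmat_orbit_bijection (n d : ℕ) (hn : 0 < n) (hd : 0 < d) :
    (∀ (w : Equiv.Perm (Fin d)) (i j : Fin d → Fin n),
      Dmat (permAct w i) (permAct w j) = Dmat i j)
    ∧ ∃ F : Quotient (orbitSetoid n d) → Matrix (Fin n) (Fin n) ℕ,
        (∀ i j : Fin d → Fin n, F (Quotient.mk (orbitSetoid n d) (i, j)) = Dmat i j)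
        ∧ Function.Injective F ∧ Set.range F = Mset n d := by
  refine ⟨Dmat_permAct, Quotient.lift (fun p => Dmat p.1 p.2) ?_, fun _ _ => rfl, ?_, ?_⟩
  · rintro p _ ⟨w, rfl⟩
    exact (Dmat_permAct w p.1 p.2).symm
  · rintro ⟨p⟩ ⟨q⟩ h
    exact Quotient.sound (exists_permAct_of_Dmat_eq h)
  · ext D
    constructor
    · rintro ⟨⟨p⟩, rfl⟩
      exact Dmat_mem_Mset p.1 p.2
    · intro hD
      obtain ⟨i, j, rfl⟩ := exists_Dmat_eq hD
      exact ⟨Quotient.mk _ (i, j), rfl⟩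

end
end

section
/- For every partition λ of d, the element Z_λ = Σ_{D ∈ M(n,d)} c_{λ,D} · ξ_D lies in the centre of the Schur algebra S_K(n,d): Z_λ ∈ S_K(n,d) and Z_λ ∘ φ = φ ∘ Z_λ for every φ ∈ S_K(n,d). -/
/-!
The element `Z_λ` acts on `K[I(n,d)]` as the class sum `∑ w` over the permutations `w` of cycle
type `λ` (`Z_eq_sum_rho`). The cycle type is a conjugacy invariant, so the class sum is central in
the group algebra of `S_d`, and `Z_λ` therefore commutes with the action of `S_d`. Elements of the
Schur algebra commute with the action of each `w`, hence with `Z_λ`.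
-/

open Finset

noncomputable section

theorem Mset_finite (n d : ℕ) : (Mset n d).Finite := by
  apply Set.Finite.subset (Set.finite_range
    (fun f : Fin n → Fin n → Fin (d + 1) => (fun a b => ((f a b : ℕ)) : Matrix (Fin n) (Fin n) ℕ)))
  intro D hD
  have hle : ∀ a b, D a b ≤ d := by
    intro a b
    have h1 : D a b ≤ ∑ b', D a b' :=
      Finset.single_le_sum (fun _ _ => Nat.zero_le _) (Finset.mem_univ b)
    have h2 : (∑ b', D a b') ≤ ∑ a', ∑ b', D a' b' :=
      Finset.single_le_sum (f := fun a' => ∑ b', D a' b') (fun _ _ => Nat.zero_le _)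
        (Finset.mem_univ a)
    have h3 : ∑ a', ∑ b', D a' b' = d := hD
    omega
  exact ⟨fun a b => ⟨D a b, Nat.lt_succ_of_le (hle a b)⟩, rfl⟩

/-- `M(n,d)` as a finset. -/
def MFin (n d : ℕ) : Finset (Matrix (Fin n) (Fin n) ℕ) := (Mset_finite n d).toFinset

/-- The action of `w ∈ S_d` on `K[I(n,d)]`, `(w • f)(i) = f (w⁻¹ • i)`, as a linear map. -/
def rho (K : Type*) [Field K] {n d : ℕ} (w : Equiv.Perm (Fin d)) :
    Module.End K ((Fin d → Fin n) → K) where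
  toFun f := fun i => f (fun k => i (w k))
  map_add' _ _ := rfl
  map_smul' _ _ := rfl

/-- The Schur algebra as a set: endomorphisms of `K[I(n,d)]` commuting with the
`S_d`-action. -/
def SchurSet (K : Type*) [Field K] (n d : ℕ) : Set (Module.End K ((Fin d → Fin n) → K)) :=
  {φ | ∀ w : Equiv.Perm (Fin d), φ ∘ₗ rho K w = rho K w ∘ₗ φ}

/-- The operator `ξ_D` on `K[I(n,d)]`. -/
def xi (K : Type*) [Field K] {n d : ℕ} (D : Matrix (Fin n) (Fin n) ℕ) :
    Module.End K ((Fin d → Fin n) → K) where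
  toFun f := fun i => ∑ j ∈ Finset.univ.filter (fun j => Dmat i j = D), f j
  map_add' f g := by funext i; simp [Finset.sum_add_distrib]
  map_smul' c f := by funext i; simp [Finset.mul_sum]

/-- `w ∈ S_d` has cycle type the partition `λ` of `d` (fixed points counted as
`1`-cycles). -/
def HasCycleType {d : ℕ} (w : Equiv.Perm (Fin d)) (lam : Nat.Partition d) : Prop :=
  w.partition.parts = lam.parts

/-- Every matrix `D(i,j)` lies in `M(n,d)`: its entries count each `k : Fin d` exactly once. -/
theorem Dmat_mem_MFin {n d : ℕ} (i j : Fin d → Fin n) : Dmat i j ∈ MFin n d := by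
  have h := Finset.card_eq_sum_card_fiberwise (s := (Finset.univ : Finset (Fin d)))
    (t := (Finset.univ : Finset (Fin n × Fin n))) (f := fun k => (i k, j k)) (by simp)
  simp only [Finset.card_univ, Fintype.card_fin, Prod.mk.injEq, Fintype.sum_prod_type] at h
  simpa [MFin, Mset, Dmat] using h.symm

theorem rho_comp_rho (K : Type*) [Field K] {n d : ℕ} (v w : Equiv.Perm (Fin d)) :
    (rho K v ∘ₗ rho K w : Module.End K ((Fin d → Fin n) → K)) = rho K (v * w) := rfl

theorem hasCycleType_conj {d : ℕ} (v w : Equiv.Perm (Fin d)) (lam : Nat.Partition d) :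
    HasCycleType (v * w * v⁻¹) lam ↔ HasCycleType w lam := by
  have h : (v * w * v⁻¹).partition = w.partition :=
    Equiv.Perm.partition_eq_of_isConj.1 (isConj_iff.2 ⟨v, rfl⟩).symm
  simp [HasCycleType, h]

open Classical in
/-- `Z_λ` acts on `K[I(n,d)]` as the class sum of `λ` in the group algebra of `S_d`: the coefficient
of `f j` in `(Z_λ f)(i)` counts the `w` of cycle type `λ` with `j = w⁻¹ • i = i ∘ w`. -/
theorem Z_eq_sum_rho (K : Type*) [Field K] (n d : ℕ)
    (lam : Nat.Partition d) (c : Matrix (Fin n) (Fin n) ℕ → ℕ)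
    (hc : ∀ i j : Fin d → Fin n,
      c (Dmat i j)
        = Nat.card {w : Equiv.Perm (Fin d) // HasCycleType w lam ∧ permAct w j = i}) :
    (∑ D ∈ MFin n d, c D • xi K D : Module.End K ((Fin d → Fin n) → K))
      = ∑ w : Equiv.Perm (Fin d) with HasCycleType w lam, rho K w := by
  refine LinearMap.ext fun f => funext fun i => ?_
  have hact : ∀ (w : Equiv.Perm (Fin d)) (j : Fin d → Fin n),
      permAct w j = i ↔ (fun k => i (w k)) = j := by
    intro w j
    constructor
    · rintro rfl
      funext k
      simp [permAct]
    · rintro rfl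
      funext k
      simp [permAct]
  simp only [LinearMap.sum_apply, LinearMap.smul_apply, Finset.sum_apply, Pi.smul_apply]
  calc ∑ D ∈ MFin n d, c D • xi K D f i
      = ∑ D ∈ MFin n d, ∑ j with Dmat i j = D, c (Dmat i j) • f j := by
        refine Finset.sum_congr rfl fun D _ => ?_
        change c D • (∑ j with Dmat i j = D, f j) = _
        rw [Finset.smul_sum]
        refine Finset.sum_congr rfl fun j hj => ?_
        rw [(Finset.mem_filter.1 hj).2]
    _ = ∑ j, c (Dmat i j) • f j :=
        Finset.sum_fiberwise_of_maps_to (fun j _ => Dmat_mem_MFin i j) _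
    _ = ∑ j, ∑ w ∈ (Finset.univ.filter fun w => HasCycleType w lam) with
          (fun k => i (w k)) = j, f (fun k => i (w k)) := by
        refine Finset.sum_congr rfl fun j _ => ?_
        rw [Finset.sum_congr rfl (g := fun _ => f j)
          (fun w hw => by rw [(Finset.mem_filter.1 hw).2]), Finset.sum_const, hc,
          Nat.card_eq_fintype_card, Fintype.card_subtype, Finset.filter_filter]
        simp only [hact]
    _ = ∑ w : Equiv.Perm (Fin d) with HasCycleType w lam, f (fun k => i (w k)) :=
        Finset.sum_fiberwise _ _ _

/-- For every partition `λ` of `d`, the element `Z_λ = ∑_D c_{λ,D} ξ_D` lies in the centre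
of the Schur algebra `S_K(n,d)`. -/
theorem Z_mem_centre (K : Type*) [Field K] (n d : ℕ) (hn : 0 < n) (hd : 0 < d)
    (lam : Nat.Partition d) (c : Matrix (Fin n) (Fin n) ℕ → ℕ)
    (hc : ∀ i j : Fin d → Fin n,
      c (Dmat i j)
        = Nat.card {w : Equiv.Perm (Fin d) // HasCycleType w lam ∧ permAct w j = i}) :
    (∑ D ∈ MFin n d, c D • xi K D) ∈ SchurSet K n d
    ∧ ∀ φ ∈ SchurSet K n d,
        (∑ D ∈ MFin n d, c D • xi K D) ∘ₗ φ = φ ∘ₗ (∑ D ∈ MFin n d, c D • xi K D) := by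
  classical
  rw [Z_eq_sum_rho K n d lam c hc]
  constructor
  · intro v
    simp only [← Module.End.mul_eq_comp, Finset.sum_mul, Finset.mul_sum]
    simp only [Module.End.mul_eq_comp, rho_comp_rho]
    -- Reindexing by `w ↦ v w v⁻¹` turns `∑ w v` into `∑ v w`.
    refine (Finset.sum_equiv (MulAut.conj v).toEquiv (fun w => ?_) (fun w _ => ?_)).symm
    · simp [hasCycleType_conj]
    · simp
  · intro φ hφ
    simp only [← Module.End.mul_eq_comp, Finset.sum_mul, Finset.mul_sum]
    exact Finset.sum_congr rfl fun w _ => (hφ w).symm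

end
end

section
/- Suppose K has characteristic zero. Then the centre of the Schur algebra S_K(n,d) equals the image under ρ of the centre of the group algebra K[S_d]; that is, an element z ∈ S_K(n,d) is central in S_K(n,d) if and only if z = Σ_{w ∈ S_d} a(w) ρ(w) for some class function a : S_d → K (a constant on conjugacy classes). -/
/-! Over a semisimple ring `R`, an additive map commuting with every `R`-endomorphism of a module
agrees on any finite family with multiplication by a scalar of `R` (`exists_smul_eq_of_commute_end`, the
density theorem). By Maschke's theorem this applies to `R = K[S_d]` acting on `K[I(n,d)]`, whose
`R`-endomorphisms form the Schur algebra; hence a central `z` has the form `∑ b(w) ρ(w)`.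
As `z` also commutes with every `ρ(u)`, averaging `b` over conjugation replaces it by a
class function. The converse holds because Schur algebra elements commute with every `ρ(w)`. -/

open Finset

noncomputable section

/-- Density theorem: `z` is the action of one scalar on the whole finite family `v`. The submodule
of `ι → M` generated by `v` is a direct summand; the projection onto it is a matrix of
endomorphisms of `M`, so it commutes with the coordinatewise action of `z`, and therefore
`z ∘ v` lies in that submodule. -/
theorem exists_smul_eq_of_commute_end {R M ι : Type*} [Ring R] [IsSemisimpleRing R]
    [AddCommGroup M] [Module R M] [Fintype ι] [DecidableEq ι] (z : M →+ M)
    (hz : ∀ (φ : M →ₗ[R] M) (x : M), z (φ x) = φ (z x)) (v : ι → M) :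
    ∃ r : R, ∀ i, z (v i) = r • v i := by
  let N : Submodule R (ι → M) := Submodule.span R {v}
  obtain ⟨q, hq⟩ := exists_isCompl N
  let P := N.projectionOnto q hq
  have hP : ∀ x : N, P x = x := Submodule.projectionOnto_apply_left hq
  have hPv : ((P v : N) : ι → M) = v :=
    congrArg Subtype.val (hP ⟨v, Submodule.mem_span_singleton_self v⟩)
  have key : ((P (fun i => z (v i)) : N) : ι → M) = fun i => z (v i) := by
    funext i
    let E : ι → M →ₗ[R] M := fun j =>
      LinearMap.proj i ∘ₗ N.subtype ∘ₗ P ∘ₗ LinearMap.single R (fun _ => M) j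
    have hE (x : ι → M) : ((P x : N) : ι → M) i = ∑ j, E j (x j) := by
      conv_lhs => rw [← Finset.univ_sum_single x]
      simp [E]
    rw [hE, ← congrFun hPv i, hE, map_sum]
    exact Finset.sum_congr rfl fun j _ => (hz (E j) (v j)).symm
  obtain ⟨r, hr⟩ := Submodule.mem_span_singleton.1 (key ▸ (P fun i => z (v i)).2)
  exact ⟨r, fun i => (congrFun hr i).symm⟩

theorem rho_mul (K : Type*) [Field K] {n d : ℕ} (u w : Equiv.Perm (Fin d)) :
    rho K (n := n) (u * w) = rho K u * rho K w := rfl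

/-- `ρ` as a bundled representation of `S_d`. -/
def rhoRep (K : Type*) [Field K] (n d : ℕ) :
    Representation K (Equiv.Perm (Fin d)) ((Fin d → Fin n) → K) where
  toFun := rho K
  map_one' := rfl
  map_mul' := rho_mul K

/-- Double centralizer property: whatever commutes with the Schur algebra lies in the image of the
group algebra. -/
theorem exists_eq_sum_rho (K : Type*) [Field K] [CharZero K] (n d : ℕ)
    (z : Module.End K ((Fin d → Fin n) → K))
    (hz : ∀ φ ∈ SchurSet K n d, z ∘ₗ φ = φ ∘ₗ z) :
    ∃ b : Equiv.Perm (Fin d) → K, z = ∑ w, b w • rho K w := by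
  have : NeZero (Nat.card (Equiv.Perm (Fin d)) : K) := ⟨Nat.cast_ne_zero.2 Nat.card_pos.ne'⟩
  let e := (rhoRep K n d).asModuleEquiv
  have hcomm (φ : (rhoRep K n d).asModule →ₗ[MonoidAlgebra K (Equiv.Perm (Fin d))]
      (rhoRep K n d).asModule) (x : (rhoRep K n d).asModule) :
      e.symm (z (e (φ x))) = φ (e.symm (z (e x))) := by
    let φ' : Module.End K ((Fin d → Fin n) → K) :=
      e.toLinearMap ∘ₗ φ.restrictScalars K ∘ₗ e.symm.toLinearMap
    have hφ' : φ' ∈ SchurSet K n d := by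
      intro w
      refine LinearMap.ext fun f => ?_
      have h1 := (rhoRep K n d).asModuleEquiv_symm_map_rho w f
      have h2 := (rhoRep K n d).asModuleEquiv_map_smul
        (MonoidAlgebra.of K _ w) (φ (e.symm f))
      rw [Representation.asAlgebraHom_of] at h2
      change e (φ (e.symm (rhoRep K n d w f))) = rhoRep K n d w (e (φ (e.symm f)))
      rw [h1, map_smul, h2]
    have := LinearMap.congr_fun (hz φ' hφ') (e x)
    simpa [φ'] using congrArg e.symm this
  obtain ⟨r, hr⟩ := exists_smul_eq_of_commute_end
    (R := MonoidAlgebra K (Equiv.Perm (Fin d)))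
    ((e.symm.toLinearMap ∘ₗ z ∘ₗ e.toLinearMap).toAddMonoidHom) hcomm
    (fun i : Fin d → Fin n => e.symm (Pi.basisFun K _ i))
  have hzr : z = (rhoRep K n d).asAlgebraHom r := by
    refine (Pi.basisFun K _).ext fun i => ?_
    have := congrArg e (hr i)
    rw [Representation.asModuleEquiv_map_smul] at this
    simpa [e] using this
  refine ⟨fun w => r.coeff w, ?_⟩
  rw [hzr, Representation.asAlgebraHom_def, MonoidAlgebra.lift_apply,
    Finsupp.sum_fintype _ _ (by simp)]
  rfl

/-- In characteristic zero, an element of the Schur algebra is central if and only if it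
is the image under `ρ` of a central element of the group algebra `K[S_d]`, i.e. of a
`K`-linear combination `∑_w a(w) w` with `a` a class function on `S_d`. -/
theorem centre_schurAlgebra_eq_image_centre_groupAlgebra
    (K : Type*) [Field K] [CharZero K] (n d : ℕ) (hn : 0 < n) (hd : 0 < d)
    (z : Module.End K ((Fin d → Fin n) → K)) (hz : z ∈ SchurSet K n d) :
    (∀ φ ∈ SchurSet K n d, z ∘ₗ φ = φ ∘ₗ z) ↔
      ∃ a : Equiv.Perm (Fin d) → K,
        (∀ u w : Equiv.Perm (Fin d), a (u * w * u⁻¹) = a w)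
        ∧ z = ∑ w : Equiv.Perm (Fin d), a w • rho K w := by
  constructor
  · intro h
    obtain ⟨b, hb⟩ := exists_eq_sum_rho K n d z h
    have hN : (Fintype.card (Equiv.Perm (Fin d)) : K) ≠ 0 :=
      Nat.cast_ne_zero.2 Fintype.card_ne_zero
    refine ⟨fun w => (Fintype.card (Equiv.Perm (Fin d)) : K)⁻¹ * ∑ x, b (x * w * x⁻¹), ?_, ?_⟩
    · intro u w
      dsimp only
      congr 1
      exact Fintype.sum_equiv (Equiv.mulRight u) _ _ fun x => by simp [mul_assoc]
    · -- Conjugating `z = ∑ b(w) ρ(w)` by `ρ(x)` leaves `z` fixed and conjugates the argument of `b`.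
      have hconj (x : Equiv.Perm (Fin d)) : z = ∑ w, b (x * w * x⁻¹) • rho K w := by
        have h1 : z = rho K x⁻¹ * (z * rho K x) := by
          change z = rho K x⁻¹ * (z ∘ₗ rho K x)
          rw [hz x]
          change z = rho K x⁻¹ * (rho K x * z)
          rw [← mul_assoc, ← rho_mul, inv_mul_cancel]
          rfl
        rw [h1, hb, Finset.sum_mul, Finset.mul_sum]
        refine Fintype.sum_equiv (MulAut.conj x⁻¹).toEquiv _ _ fun w => ?_
        simp [mul_assoc, rho_mul]
      have hsum : (Fintype.card (Equiv.Perm (Fin d)) : K) • z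
          = ∑ w, (∑ x, b (x * w * x⁻¹)) • rho K w := by
        simp_rw [Finset.sum_smul]
        rw [Finset.sum_comm, ← Finset.sum_congr rfl fun x _ => hconj x]
        simp [Nat.cast_smul_eq_nsmul]
      simp_rw [mul_smul]
      rw [← Finset.smul_sum, ← hsum, inv_smul_smul₀ hN]
  · rintro ⟨a, -, rfl⟩ φ hφ
    change (∑ w, a w • rho K w) * φ = φ * ∑ w, a w • rho K w
    rw [Finset.sum_mul, Finset.mul_sum]
    refine Finset.sum_congr rfl fun w _ => ?_
    rw [smul_mul_assoc, mul_smul_comm]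
    exact congrArg (a w • ·) (hφ w).symm

end
end
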